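/- Let D > 0, let φ : ℤ → ℝ be bounded, and set a_n = n/D + φ(n), assuming a_n ≠ 0 for all n ∈ ℤ. Then: (i) the partial sums Σ_{n : |a_n| ≤ N} 1/a_n are bounded uniformly in N; (ii) Σ_{n∈ℕ} |1/a_n + 1/a_{−n}| < ∞; and (iii) the product f(z) = (1 − z/a_0) ∏_{n=1}^∞ (1 − z/a_n)(1 − z/a_{−n}) converges locally uniformly on ℂ and defines an entire function of exponential growth, i.e., there exist C, σ > 0 with |f(z)| ≤ C e^{σ|z|} for all z ∈ ℂ. -/

import Mathlib

open Filter Topology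

noncomputable section

lemma aux_prod_le (s : ℝ) (hs : 1 ≤ s) (N : ℕ) :
    ∏ j ∈ Finset.range N, (1 + s ^ 2 / ((j : ℝ) + 1) ^ 2) ≤ Real.exp (Real.pi * s) := by
  have hmono : Monotone (fun N : ℕ => Real.pi * s *
      ∏ j ∈ Finset.range N, (1 + s ^ 2 / ((j : ℝ) + 1) ^ 2)) := by
    apply monotone_nat_of_le_succ
    intro n
    rw [Finset.prod_range_succ]
    have h1 : 0 ≤ ∏ j ∈ Finset.range n, (1 + s ^ 2 / ((j : ℝ) + 1) ^ 2) :=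
      Finset.prod_nonneg fun _ _ => by positivity
    have h2 : 0 ≤ s ^ 2 / ((n : ℝ) + 1) ^ 2 := by positivity
    have h3 : 0 ≤ Real.pi * s := by positivity
    refine mul_le_mul_of_nonneg_left ?_ h3
    nlinarith
  have ht := (Complex.tendsto_euler_sin_prod (s * Complex.I)).norm
  have ht' : Tendsto (fun N : ℕ => Real.pi * s *
      ∏ j ∈ Finset.range N, (1 + s ^ 2 / ((j : ℝ) + 1) ^ 2)) atTop
      (𝓝 ‖Complex.sin (Real.pi * (s * Complex.I))‖) := by
    refine ht.congr fun n => ?_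
    rw [norm_mul, norm_prod]
    congr 1
    · simp [abs_of_pos Real.pi_pos, abs_of_nonneg (by linarith : 0 ≤ s)]
    · refine Finset.prod_congr rfl fun j _ => ?_
      have : (1 : ℂ) - (s * Complex.I) ^ 2 / ((j : ℂ) + 1) ^ 2
          = ((1 + s ^ 2 / ((j : ℝ) + 1) ^ 2 : ℝ) : ℂ) := by
        push_cast
        rw [mul_pow, Complex.I_sq]; ring
      rw [this, Complex.norm_real, Real.norm_of_nonneg (by positivity)]
  have h1 := hmono.ge_of_tendsto ht' N
  have h2 : ‖Complex.sin (Real.pi * (s * Complex.I))‖ ≤ Real.exp (Real.pi * s) := by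
    rw [show (Real.pi * (s * Complex.I) : ℂ) = ((Real.pi * s : ℝ) : ℂ) * Complex.I by
      push_cast; ring, Complex.sin_mul_I, norm_mul, Complex.norm_I, mul_one,
      ← Complex.ofReal_sinh, Complex.norm_real, Real.norm_of_nonneg
        (Real.sinh_nonneg_iff.2 (by positivity)), Real.sinh_eq]
    have := Real.exp_pos (Real.pi * s)
    have := Real.exp_pos (-(Real.pi * s))
    linarith
  have h3 : 0 ≤ ∏ j ∈ Finset.range N, (1 + s ^ 2 / ((j : ℝ) + 1) ^ 2) :=
    Finset.prod_nonneg fun _ _ => by positivity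
  have h4 : 1 ≤ Real.pi * s := by nlinarith [Real.pi_gt_three]
  nlinarith

lemma aux_summable (K : ℝ) : Summable fun m : ℕ => K / ((m : ℝ) + 1) ^ 2 := by
  have h := (summable_nat_add_iff (f := fun m : ℕ => 1 / (m : ℝ) ^ 2) 1).2
    (Real.summable_one_div_nat_pow.2 one_lt_two)
  simpa [div_eq_mul_inv] using h.mul_left K

lemma aux_entire (u : ℕ → ℂ → ℂ) (K : ℝ) (hK : 1 ≤ K) (hu : ∀ m, Differentiable ℂ (u m))
    (hb : ∀ m z, ‖u m z‖ ≤ K * (‖z‖ + ‖z‖ ^ 2) / ((m : ℝ) + 1) ^ 2) :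
    ∃ f : ℂ → ℂ, TendstoLocallyUniformly
      (fun N : ℕ => fun z => ∏ m ∈ Finset.range N, (1 + u m z)) f atTop ∧
      Differentiable ℂ f ∧ ∀ z, ‖f z‖ ≤ Real.exp (Real.pi * (K * (‖z‖ + 1))) := by
  have hball : ∀ R : ℝ, TendstoLocallyUniformlyOn
      (fun N : ℕ => fun z => ∏ m ∈ Finset.range N, (1 + u m z))
      (fun z => ∏' m, (1 + u m z)) atTop (Metric.ball 0 R) := by
    intro R
    refine (Summable.hasProdLocallyUniformlyOn_nat_one_add Metric.isOpen_ball
      (aux_summable (K * (R + R ^ 2))) (Eventually.of_forall fun m z hz => ?_)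
      (fun m => (hu m).continuous.continuousOn)).tendstoLocallyUniformlyOn_finsetRange
    refine (hb m z).trans ?_
    have hz' : ‖z‖ ≤ R := by simpa using (mem_ball_zero_iff.1 hz).le
    gcongr
  have hloc : TendstoLocallyUniformly
      (fun N : ℕ => fun z => ∏ m ∈ Finset.range N, (1 + u m z))
      (fun z => ∏' m, (1 + u m z)) atTop := by
    intro U hU x
    have hx : x ∈ Metric.ball (0 : ℂ) (‖x‖ + 1) := by simp
    obtain ⟨t, ht, h⟩ := hball (‖x‖ + 1) U hU x hx
    rw [Metric.isOpen_ball.nhdsWithin_eq hx] at ht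
    exact ⟨t, ht, h⟩
  refine ⟨_, hloc, ?_, fun z => ?_⟩
  · rw [← differentiableOn_univ]
    refine (tendstoLocallyUniformlyOn_univ.2 hloc).differentiableOn
      (Eventually.of_forall fun N => ?_) isOpen_univ
    have : Differentiable ℂ (fun z => ∏ m ∈ Finset.range N, (1 + u m z)) := by fun_prop
    exact this.differentiableOn
  · have ht := ((tendstoLocallyUniformlyOn_univ.2 hloc).tendsto_at (Set.mem_univ z)).norm
    refine le_of_tendsto ht (Eventually.of_forall fun N => ?_)
    rw [norm_prod]
    have hz := norm_nonneg z
    refine le_trans (Finset.prod_le_prod (fun _ _ => norm_nonneg _) fun m _ => ?_)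
      (aux_prod_le (K * (‖z‖ + 1)) (by nlinarith) N)
    refine (norm_add_le _ _).trans ?_
    rw [norm_one]
    have : K * (‖z‖ + ‖z‖ ^ 2) ≤ (K * (‖z‖ + 1)) ^ 2 := by
      nlinarith [mul_nonneg (by linarith : 0 ≤ K) hz, mul_nonneg (by linarith : 0 ≤ K - 1) (by linarith : 0 ≤ K), mul_nonneg (mul_nonneg (by linarith : 0 ≤ K - 1) (by linarith : 0 ≤ K)) hz, mul_nonneg (mul_nonneg (by linarith : 0 ≤ K - 1) (by linarith : 0 ≤ K)) (sq_nonneg ‖z‖), sq_nonneg K]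
    have h2 := hb m z
    have h3 : K * (‖z‖ + ‖z‖ ^ 2) / ((m : ℝ) + 1) ^ 2 ≤
      (K * (‖z‖ + 1)) ^ 2 / ((m : ℝ) + 1) ^ 2 := by gcongr
    linarith

lemma aux_sum_Icc (g : ℤ → ℝ) (R : ℕ) : ∑ n ∈ Finset.Icc (-(R : ℤ)) R, g n =
    g 0 + ∑ n ∈ Finset.range R, (g ((n : ℤ) + 1) + g (-((n : ℤ) + 1))) := by
  induction R with
  | zero => simp
  | succ R ih =>
    have := Finset.sum_Icc_succ_eq_add_endpoints g (N := R)
    push_cast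
    rw [this, ih, Finset.sum_range_succ]; ring

lemma aux_lower (D M : ℝ) (hD : 0 < D) (a : ℤ → ℝ)
    (hM : ∀ n : ℤ, |a n - n / D| ≤ M) (hne : ∀ n : ℤ, a n ≠ 0) :
    ∃ K : ℝ, 1 ≤ K ∧ ∀ n : ℤ, |(n : ℝ)| + 1 ≤ K * |a n| := by
  have hM0 : 0 ≤ M := (abs_nonneg _).trans (hM 0)
  obtain ⟨B, hB⟩ := ((Set.finite_Icc (-⌈2 * D * (M + 1)⌉) ⌈2 * D * (M + 1)⌉).image
    (fun n : ℤ => (|(n : ℝ)| + 1) / |a n|)).bddAbove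
  refine ⟨max 1 (max B (2 * D + 1)), le_max_left _ _, fun n => ?_⟩
  have hpos : 0 < |a n| := abs_pos.2 (hne n)
  by_cases hn : |n| ≤ ⌈2 * D * (M + 1)⌉
  · have h := hB ⟨n, abs_le.1 hn, rfl⟩
    simp only [div_le_iff₀ hpos] at h
    refine h.trans ?_
    gcongr
    exact (le_max_left _ _).trans (le_max_right _ _)
  · push Not at hn
    have hn' : 2 * D * (M + 1) < |(n : ℝ)| := by
      have h1 := Int.le_ceil (2 * D * (M + 1))
      have h2 : ((⌈2 * D * (M + 1)⌉ : ℤ) : ℝ) < ((|n| : ℤ) : ℝ) := by exact_mod_cast hn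
      rw [Int.cast_abs] at h2
      linarith
    have h1 : |(n : ℝ)| / D - M ≤ |a n| := by
      have := abs_sub_abs_le_abs_sub ((n : ℝ) / D) (a n)
      rw [abs_sub_comm, abs_div, abs_of_pos hD] at this
      linarith [hM n]
    have h2 : |(n : ℝ)| ≤ D * |a n| + D * M := by
      have : |(n : ℝ)| = D * (|(n : ℝ)| / D) := by field_simp
      rw [this, ← mul_add]
      gcongr
      linarith
    have h3 : |(n : ℝ)| + 1 ≤ (2 * D + 1) * |a n| := by
      have : 1 ≤ |a n| := by
        by_contra hc
        push Not at hc
        nlinarith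
      nlinarith
    refine h3.trans ?_
    gcongr
    exact (le_max_right _ _).trans (le_max_right _ _)

lemma aux_inv {x K t : ℝ} (hx : x ≠ 0) (ht : 0 ≤ t) (h : t + 1 ≤ K * |x|) :
    |1 / x| ≤ K / (t + 1) := by
  have hp : 0 < |x| := abs_pos.2 hx
  rw [abs_div, abs_one, div_le_div_iff₀ hp (by linarith)]
  linarith

lemma aux_pair (D M K : ℝ) (a : ℤ → ℝ)
    (hM : ∀ n : ℤ, |a n - n / D| ≤ M) (hne : ∀ n : ℤ, a n ≠ 0)
    (hK : ∀ n : ℤ, |(n : ℝ)| + 1 ≤ K * |a n|) (n : ℤ) :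
    |1 / a n * (1 / a (-n))| ≤ K ^ 2 / (|(n : ℝ)| + 1) ^ 2 ∧
    |1 / a n + 1 / a (-n)| ≤ 2 * M * K ^ 2 / (|(n : ℝ)| + 1) ^ 2 := by
  have h1 := aux_inv (hne n) (abs_nonneg _) (hK n)
  have h2 := aux_inv (hne (-n)) (abs_nonneg _) (hK (-n))
  rw [Int.cast_neg, abs_neg] at h2
  have h3 : |1 / a n * (1 / a (-n))| ≤ K ^ 2 / (|(n : ℝ)| + 1) ^ 2 := by
    rw [abs_mul, ← div_pow, pow_two]
    exact mul_le_mul h1 h2 (abs_nonneg _) ((abs_nonneg _).trans h1)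
  refine ⟨h3, ?_⟩
  have h4 : 1 / a n + 1 / a (-n) = (a n + a (-n)) * (1 / a n * (1 / a (-n))) := by
    have := hne n
    have := hne (-n)
    field_simp
    ring
  have h5 : |a n + a (-n)| ≤ 2 * M := by
    have e : a n + a (-n) = (a n - n / D) + (a (-n) - ((-n : ℤ) : ℝ) / D) := by
      push_cast; ring
    rw [e]
    exact (abs_add_le _ _).trans (by linarith [hM n, hM (-n)])
  rw [h4, abs_mul, mul_div_assoc]
  exact mul_le_mul h5 h3 (abs_nonneg _) ((abs_nonneg _).trans h5)

lemma aux_partial (D M K : ℝ) (hD : 0 < D) (a : ℤ → ℝ) (hK1 : 1 ≤ K)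
    (hM : ∀ n : ℤ, |a n - n / D| ≤ M) (hne : ∀ n : ℤ, a n ≠ 0)
    (hK : ∀ n : ℤ, |(n : ℝ)| + 1 ≤ K * |a n|)
    (hs : Summable fun n : ℕ => |1 / a ((n : ℤ) + 1) + 1 / a (-((n : ℤ) + 1))|) :
    (∀ N : ℝ, {n : ℤ | |a n| ≤ N}.Finite) ∧
      ∃ M : ℝ, ∀ N : ℝ, |∑ᶠ n ∈ {n : ℤ | |a n| ≤ N}, 1 / a n| ≤ M := by
  have hM0 : 0 ≤ M := (abs_nonneg _).trans (hM 0)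
  have hup : ∀ n : ℤ, |(n : ℝ)| ≤ D * (|a n| + M) ∧ D * (|a n| - M) ≤ |(n : ℝ)| := by
    intro n
    have e : |(n : ℝ)| = D * |(n : ℝ) / D| := by
      rw [abs_div, abs_of_pos hD]; field_simp
    have h1 := abs_sub_abs_le_abs_sub (a n) ((n : ℝ) / D)
    have h2 := abs_sub_abs_le_abs_sub ((n : ℝ) / D) (a n)
    rw [abs_sub_comm] at h2
    have h3 := hM n
    rw [e]
    constructor <;> gcongr <;> linarith
  have hfloor : ∀ N : ℝ, 0 ≤ N → ∀ n : ℤ, |a n| ≤ N →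
      n ∈ Finset.Icc (-(⌊D * (N + M)⌋₊ : ℤ)) ⌊D * (N + M)⌋₊ := by
    intro N hN n hn
    rw [Finset.mem_Icc, ← abs_le, ← Int.natCast_natAbs, Nat.cast_le]
    apply Nat.le_floor
    rw [Nat.cast_natAbs, Int.cast_abs]
    refine (hup n).1.trans ?_
    gcongr
  have hneg : ∀ N : ℝ, N < 0 → {n : ℤ | |a n| ≤ N} = ∅ := by
    intro N hN
    ext n
    simp only [Set.mem_setOf_eq, Set.mem_empty_iff_false, iff_false, not_le]
    exact hN.trans_le (abs_nonneg _)
  have hinv : ∀ n : ℤ, |1 / a n| ≤ K := fun n =>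
    (aux_inv (hne n) (abs_nonneg _) (hK n)).trans
      (div_le_self (by linarith) (by linarith [abs_nonneg (n : ℝ)]))
  refine ⟨fun N => ?_, ?_⟩
  · rcases lt_or_ge N 0 with hN | hN
    · rw [hneg N hN]; exact Set.finite_empty
    · exact (Finset.finite_toSet _).subset (hfloor N hN)
  set S := ∑' n : ℕ, |1 / a ((n : ℤ) + 1) + 1 / a (-((n : ℤ) + 1))| with hS
  have hS0 : 0 ≤ S := tsum_nonneg fun _ => abs_nonneg _
  set B : ℕ := ⌈2 * D * M⌉₊ + 1 with hB
  refine ⟨K + S + (2 * (B + 1)) * K, fun N => ?_⟩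
  rcases lt_or_ge N 0 with hN | hN
  · rw [hneg N hN]
    simp only [Set.mem_empty_iff_false, finsum_false, finsum_zero, abs_zero]
    positivity
  set R : ℕ := ⌊D * (N + M)⌋₊ with hR
  set T := Finset.Icc (-(R : ℤ)) R with hT
  have hfs : ∑ᶠ n ∈ {n : ℤ | |a n| ≤ N}, 1 / a n = ∑ n ∈ T with |a n| ≤ N, 1 / a n := by
    apply finsum_mem_eq_sum_of_inter_support_eq
    ext n
    simp only [Set.mem_inter_iff, Set.mem_setOf_eq, Finset.coe_filter, and_congr_left_iff]
    intro _
    exact ⟨fun h => ⟨hfloor N hN n h, h⟩, fun h => h.2⟩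
  have hsplit := Finset.sum_filter_add_sum_filter_not T (fun n => |a n| ≤ N) (fun n => 1 / a n)
  have hTsum : |∑ n ∈ T, 1 / a n| ≤ K + S := by
    rw [hT, aux_sum_Icc (fun n => 1 / a n)]
    refine (abs_add_le _ _).trans (add_le_add (hinv 0) ?_)
    refine (Finset.abs_sum_le_sum_abs _ _).trans ?_
    exact hs.sum_le_tsum _ fun _ _ => abs_nonneg _
  have hcard : (({n ∈ T | ¬ |a n| ≤ N}).card : ℝ) ≤ 2 * (B + 1) := by
    have hsub : ({n ∈ T | ¬ |a n| ≤ N}) ⊆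
        Finset.Icc ((R : ℤ) - B) R ∪ Finset.Icc (-(R : ℤ)) (-R + B) := by
      intro n hn
      rw [Finset.mem_filter, hT, Finset.mem_Icc, not_le] at hn
      obtain ⟨⟨h1, h2⟩, h3⟩ := hn
      have h4 : (R : ℝ) ≤ D * (N + M) := Nat.floor_le (by positivity)
      have h5 : 2 * D * M ≤ (B : ℝ) := by
        rw [hB]; push_cast
        linarith [Nat.le_ceil (2 * D * M)]
      have h6 := (hup n).2
      have h7 : D * (N - M) ≤ D * (|a n| - M) := by gcongr
      have h8 : (R : ℝ) - B ≤ |(n : ℝ)| := by linarith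
      have h9 : (R : ℤ) - B ≤ |n| := by exact_mod_cast h8
      rw [Finset.mem_union, Finset.mem_Icc, Finset.mem_Icc]
      rcases abs_cases n with h | h <;> omega
    have h := (Finset.card_le_card hsub).trans (Finset.card_union_le _ _)
    rw [Int.card_Icc, Int.card_Icc] at h
    have h' : ({n ∈ T | ¬ |a n| ≤ N}).card ≤ 2 * (B + 1) := by omega
    exact_mod_cast h'
  have hrest : |∑ n ∈ T with ¬ |a n| ≤ N, 1 / a n| ≤ (2 * (B + 1)) * K := by
    refine (Finset.abs_sum_le_sum_abs _ _).trans ?_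
    refine (Finset.sum_le_card_nsmul _ _ K fun n _ => hinv n).trans ?_
    rw [nsmul_eq_mul]
    gcongr
  rw [hfs, eq_sub_of_add_eq hsplit]
  exact (abs_sub _ _).trans (add_le_add hTsum hrest)

/-- Let `D > 0`, `φ : ℤ → ℝ` bounded, `a_n = n/D + φ(n)`, all `a_n ≠ 0`.
Then (i) the sets `{n : |a_n| ≤ N}` are finite and the partial sums `Σ_{|a_n| ≤ N} 1/a_n` are
uniformly bounded; (ii) `Σ_{n∈ℕ} |1/a_n + 1/a_{-n}| < ∞`; (iii) the canonical product
`f(z) = (1 - z/a_0) ∏_{n≥1} (1 - z/a_n)(1 - z/a_{-n})` converges locally uniformly on `ℂ`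
to an entire function of exponential growth. -/
theorem statement16 (D : ℝ) (hD : 0 < D) (φ : ℤ → ℝ)
    (hφ : ∃ M : ℝ, ∀ n : ℤ, |φ n| ≤ M)
    (a : ℤ → ℝ) (ha : ∀ n : ℤ, a n = (n : ℝ) / D + φ n)
    (hne : ∀ n : ℤ, a n ≠ 0) :
    -- (i)
    ((∀ N : ℝ, {n : ℤ | |a n| ≤ N}.Finite) ∧
      ∃ M : ℝ, ∀ N : ℝ, |∑ᶠ n ∈ {n : ℤ | |a n| ≤ N}, 1 / a n| ≤ M) ∧
    -- (ii)
    (Summable fun n : ℕ => |1 / a ((n : ℤ) + 1) + 1 / a (-((n : ℤ) + 1))|) ∧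
    -- (iii)
    (∃ f : ℂ → ℂ,
      TendstoLocallyUniformly
        (fun N : ℕ => fun z : ℂ => (1 - z / (a 0 : ℂ)) *
          ∏ n ∈ Finset.range N,
            ((1 - z / (a ((n : ℤ) + 1) : ℂ)) * (1 - z / (a (-((n : ℤ) + 1)) : ℂ))))
        f atTop ∧
      Differentiable ℂ f ∧
      ∃ C σ : ℝ, 0 < C ∧ 0 < σ ∧ ∀ z : ℂ, ‖f z‖ ≤ C * Real.exp (σ * ‖z‖)) := by
  obtain ⟨M, hM⟩ := hφ
  have hM : ∀ n : ℤ, |a n - n / D| ≤ M := fun n => by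
    rw [ha n, add_sub_cancel_left]; exact hM n
  have hM0 : 0 ≤ M := (abs_nonneg _).trans (hM 0)
  obtain ⟨K, hK1, hK⟩ := aux_lower D M hD a hM hne
  have hpair := aux_pair D M K a hM hne hK
  have hs : Summable fun n : ℕ => |1 / a ((n : ℤ) + 1) + 1 / a (-((n : ℤ) + 1))| := by
    refine Summable.of_nonneg_of_le (fun _ => abs_nonneg _) (fun n => ?_)
      (aux_summable (2 * M * K ^ 2))
    refine (hpair ((n : ℤ) + 1)).2.trans ?_
    push_cast
    rw [abs_of_nonneg (by positivity)]
    gcongr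
    linarith
  refine ⟨aux_partial D M K hD a hK1 hM hne hK hs, hs, ?_⟩
  set L : ℝ := 2 * M * K ^ 2 + K ^ 2 with hL
  have hKK : K ≤ K ^ 2 := by nlinarith
  have hMK : 0 ≤ 2 * M * K ^ 2 := by positivity
  have hL1 : 1 ≤ L := by linarith
  let u : ℕ → ℂ → ℂ := fun m z => match m with
    | 0 => - (z / (a 0 : ℂ))
    | n + 1 => - z * ((1 / a ((n : ℤ) + 1) + 1 / a (-((n : ℤ) + 1)) : ℝ) : ℂ)
        + z ^ 2 * ((1 / a ((n : ℤ) + 1) * (1 / a (-((n : ℤ) + 1))) : ℝ) : ℂ)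
  have hu : ∀ m, Differentiable ℂ (u m) := by
    intro m
    cases m <;> simp only [u] <;> fun_prop
  have hub : ∀ m z, ‖u m z‖ ≤ L * (‖z‖ + ‖z‖ ^ 2) / ((m : ℝ) + 1) ^ 2 := by
    intro m z
    have hz := norm_nonneg z
    cases m with
    | zero =>
      have h := aux_inv (hne 0) (abs_nonneg _) (hK 0)
      simp only [Int.cast_zero, abs_zero, zero_add, div_one] at h
      simp only [u, norm_neg, Nat.cast_zero, zero_add, one_pow, div_one]
      rw [div_eq_mul_one_div, norm_mul, ← Complex.ofReal_one, ← Complex.ofReal_div,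
        Complex.norm_real, Real.norm_eq_abs]
      calc ‖z‖ * |1 / a 0| ≤ ‖z‖ * L := by gcongr; linarith
        _ ≤ L * (‖z‖ + ‖z‖ ^ 2) := by nlinarith [sq_nonneg ‖z‖]
    | succ n =>
      obtain ⟨h1, h2⟩ := hpair ((n : ℤ) + 1)
      have e : |(((n : ℤ) + 1 : ℤ) : ℝ)| = ((n + 1 : ℕ) : ℝ) := by
        push_cast
        rw [abs_of_nonneg (by positivity)]
      rw [e] at h1 h2
      set q : ℝ := (((n + 1 : ℕ) : ℝ) + 1) ^ 2 with hq
      have hq0 : 0 < q := by positivity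
      simp only [u]
      refine (norm_add_le _ _).trans ?_
      rw [norm_mul, norm_mul, norm_neg, norm_pow, Complex.norm_real, Complex.norm_real,
        Real.norm_eq_abs, Real.norm_eq_abs]
      calc _ ≤ ‖z‖ * (2 * M * K ^ 2 / q) + ‖z‖ ^ 2 * (K ^ 2 / q) := by gcongr
        _ = (‖z‖ * (2 * M * K ^ 2) + ‖z‖ ^ 2 * K ^ 2) / q := by ring
        _ ≤ _ := by
          gcongr
          rw [hL]
          nlinarith [mul_nonneg hz (sq_nonneg K), mul_nonneg hMK (sq_nonneg ‖z‖)]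
  obtain ⟨f, hf, hfd, hfb⟩ := aux_entire u L hL1 hu hub
  refine ⟨f, ?_, hfd, Real.exp (Real.pi * L), Real.pi * L, Real.exp_pos _, by positivity,
    fun z => (hfb z).trans_eq ?_⟩
  · have hfe : (fun N : ℕ => fun z : ℂ => (1 - z / (a 0 : ℂ)) *
          ∏ n ∈ Finset.range N,
            ((1 - z / (a ((n : ℤ) + 1) : ℂ)) * (1 - z / (a (-((n : ℤ) + 1)) : ℂ))))
        = fun N : ℕ => fun z : ℂ => ∏ m ∈ Finset.range (N + 1), (1 + u m z) := by
      funext N z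
      rw [Finset.prod_range_succ', mul_comm]
      congr 1
      · refine Finset.prod_congr rfl fun n _ => ?_
        simp only [u]
        push_cast
        ring
    rw [hfe]
    intro U hU x
    obtain ⟨t, ht, h⟩ := hf U hU x
    exact ⟨t, ht, (tendsto_add_atTop_nat 1).eventually h⟩
  · rw [← Real.exp_add]; congr 1; ring

end
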